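/- Let P = (a,c) be a K-point of the affine curve y^d = f(x) which is a torsion point of order m, where m > 1 and m ≠ d (i.e., m is the least positive integer with m_P^m principal). Then c ≠ 0, the d maximal ideals m_{(a,ζc)} = (X − a, Y − ζc), as ζ ranges over the d-th roots of unity in K, are pairwise distinct, and each point (a, ζc) is also a torsion point of order m. Consequently, the number of torsion points of order m on the curve is divisible by d. -/

import Mathlib

open Polynomial

/-- The affine coordinate ring `A = K[X,Y]/(Y^d − f(X))` of the curve `y^d = f(x)`,
realized as `AdjoinRoot` of the polynomial `Y^d - f(X)` over `K[X]`. -/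
noncomputable abbrev CurveRing (K : Type*) [Field K] (d : ℕ) (f : K[X]) : Type _ :=
  AdjoinRoot ((X : K[X][X]) ^ d - C f)

/-- The maximal ideal `m_{(a,c)} = (X - a, Y - c)` of the coordinate ring. -/
noncomputable def ptIdeal {K : Type*} [Field K] (d : ℕ) (f : K[X]) (a c : K) :
    Ideal (CurveRing K d f) :=
  Ideal.span {AdjoinRoot.of _ (X - C a), AdjoinRoot.root _ - AdjoinRoot.of _ (C c)}

/-- `P = (a,c)` is a torsion point of order `m` on the Jacobian: `m` is the least
positive integer such that `m_P ^ m` is a principal ideal of `A`. -/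
def IsTorsionOfOrder {K : Type*} [Field K] (d : ℕ) (f : K[X]) (a c : K) (m : ℕ) : Prop :=
  IsLeast {k : ℕ | 0 < k ∧ (ptIdeal d f a c ^ k).IsPrincipal} m

/-! A `K`-valuation at infinity assigns to `g ∈ A` a pole order `d * i + n * j` (normalised so that
`x` has pole order `d` and `y` has pole order `n`), and `g` is constant when its pole order is `0`.
As `n ≥ 2` is coprime to `d`, the pole order `d` of `x - a` is not a sum of two nonzero
such values, so `x - a` is irreducible in `A`. At a point `P = (a, 0)` one has `m_P ^ d = (x - a)`,
and irreducibility forces the order of `P` to be exactly `d`; every point of order `m ≠ d`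
therefore has `c ≠ 0`. The group of `d`-th roots of unity acts on the points of order `m` through
the automorphisms `y ↦ ζ y` of `A`, and this action is free because `c ≠ 0`. -/

section Ring

variable {R : Type*} [CommRing R]

theorem irreducible_X_pow_sub_C_of_prime_dvd [IsDomain R] {p a : R} (hp : Prime p) (hpa : p ∣ a)
    (hpa' : ¬ p ^ 2 ∣ a) {d : ℕ} (hd : d ≠ 0) : Irreducible (X ^ d - C a : R[X]) := by
  have hmonic : (X ^ d - C a : R[X]).Monic := monic_X_pow_sub_C a hd
  have hdeg : (X ^ d - C a : R[X]).degree = d := degree_X_pow_sub_C (Nat.pos_of_ne_zero hd) a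
  refine irreducible_of_eisenstein_criterion (P := Ideal.span {p})
    ((Ideal.span_singleton_prime hp.ne_zero).2 hp) ?_ (fun i hi => ?_) ?_ ?_ hmonic.isPrimitive
  · rw [hmonic.leadingCoeff, Ideal.mem_span_singleton]
    exact hp.not_dvd_one
  · rw [hdeg, Nat.cast_lt] at hi
    rw [Ideal.mem_span_singleton, coeff_sub, coeff_X_pow, if_neg hi.ne, zero_sub, dvd_neg, coeff_C]
    split_ifs
    exacts [hpa, dvd_zero p]
  · rw [hdeg]
    exact_mod_cast Nat.pos_of_ne_zero hd
  · rw [Ideal.span_singleton_pow, Ideal.mem_span_singleton, coeff_sub, coeff_X_pow,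
      if_neg hd.symm, zero_sub, dvd_neg, coeff_C_zero]
    exact hpa'

theorem span_pair_pow_eq_span_singleton {u y q : R} {d : ℕ} (hd : d ≠ 0) (hy : y ^ d = u * q)
    (huq : IsCoprime u q) : Ideal.span {u, y} ^ d = Ideal.span {u} := by
  apply le_antisymm
  · have hu : Ideal.Quotient.mk (Ideal.span {u}) u = 0 :=
      Ideal.Quotient.eq_zero_iff_mem.2 (Ideal.mem_span_singleton_self u)
    rw [← Ideal.mk_ker (I := Ideal.span {u}), ← Ideal.map_eq_bot_iff_le_ker, Ideal.map_pow,
      Ideal.map_span, Set.image_pair, hu, Ideal.span_insert_zero, Ideal.span_singleton_pow,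
      ← map_pow, hy, map_mul, hu, zero_mul, Ideal.span_singleton_eq_bot]
  · obtain ⟨s, t, hst⟩ := huq.pow_left (m := d - 1)
    have hu : u = s * u ^ d + t * y ^ d := by
      rw [hy, ← pow_sub_one_mul hd]
      linear_combination -u * hst
    rw [Ideal.span_singleton_le_iff_mem]
    nth_rewrite 2 [hu]
    exact add_mem
      (Ideal.mul_mem_left _ _ (Ideal.pow_mem_pow (Ideal.subset_span (Set.mem_insert _ _)) d))
      (Ideal.mul_mem_left _ _ (Ideal.pow_mem_pow
        (Ideal.subset_span (Set.mem_insert_of_mem _ (Set.mem_singleton _))) d))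

theorem eq_of_isPrincipal_pow_of_pow_eq_span_irreducible [IsDomain R] {I : Ideal R} {π : R}
    {d m : ℕ} (hπ : Irreducible π) (hI : I ^ d = Ideal.span {π}) (hm : m ≠ 0) (hmd : m ≤ d)
    (h : (I ^ m).IsPrincipal) : m = d := by
  have eq_zero_of_pow_eq_top {k : ℕ} (hk : I ^ k = ⊤) : k = 0 := by
    refine (Ideal.pow_eq_top_iff.1 hk).resolve_left fun hI_top => hπ.not_isUnit ?_
    rw [← Ideal.span_singleton_eq_top, ← hI, hI_top, Ideal.top_pow]
  obtain ⟨g, hg⟩ := h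
  rw [Ideal.submodule_span_eq] at hg
  obtain ⟨h, rfl⟩ : g ∣ π := by
    rw [← Ideal.span_singleton_le_span_singleton, ← hI, ← hg]
    exact Ideal.pow_le_pow_right hmd
  have hh : I ^ (d - m) = Ideal.span {h} := by
    rw [← Ideal.span_singleton_mul_right_inj (left_ne_zero_of_mul hπ.ne_zero), ← hg, ← pow_add,
      Nat.add_sub_cancel' hmd, hI, hg, Ideal.span_singleton_mul_span_singleton]
  rcases hπ.isUnit_or_isUnit rfl with hu | hu
  · exact absurd (eq_zero_of_pow_eq_top (hg.trans (Ideal.span_singleton_eq_top.2 hu))) hm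
  · have := eq_zero_of_pow_eq_top (hh.trans (Ideal.span_singleton_eq_top.2 hu))
    lia

end Ring

theorem natCard_dvd_natCard_of_stabilizer_eq_bot {G X : Type*} [Group G] [MulAction G X]
    (h : ∀ x : X, MulAction.stabilizer G x = ⊥) : Nat.card G ∣ Nat.card X := by
  rw [Nat.card_congr (MulAction.selfEquivOrbitsQuotientProd h), Nat.card_prod]
  exact dvd_mul_left _ _

section Valuation

variable {K : Type*} [Field K]

theorem exists_valuationSubring_one_lt_valuation {L : Type*} [Field L] [Algebra K L] {x : L}
    (hx : Transcendental K x) :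
    ∃ V : ValuationSubring L, V.valuation.IsTrivialOn K ∧ 1 < V.valuation x := by
  have hx' : x ∉ (integralClosure K L).toSubring := fun h => hx (IsIntegral.isAlgebraic h)
  obtain ⟨V, hKV, hxV⟩ := Subring.exists_le_valuationSubring_of_isIntegrallyClosedIn hx'
  refine ⟨V, Valuation.IsTrivialOn.of_le_one _ fun k => ?_, ?_⟩
  · exact (V.valuation_le_one_iff _).2 (hKV (algebraMap_mem (integralClosure K L) k))
  · rwa [← not_le, V.valuation_le_one_iff]

/-- The weighted degree of a bivariate polynomial in which `X` has weight `d` and `Y` has weight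
`n`: for a polynomial of degree `< d` in `Y`, it is the order of the pole at infinity of the
function it represents on a curve `y ^ d = f(x)` with `n = deg f` coprime to `d`. -/
noncomputable def poleOrder (d n : ℕ) (p : K[X][X]) : ℕ :=
  p.support.sup fun j => d * (p.coeff j).natDegree + n * j

theorem exists_poleOrder_eq (d n : ℕ) (p : K[X][X]) : ∃ i j, poleOrder d n p = d * i + n * j := by
  rcases p.support.eq_empty_or_nonempty with hp | hp
  · exact ⟨0, 0, by rw [poleOrder, hp, Finset.sup_empty, bot_eq_zero, mul_zero, mul_zero, add_zero]⟩
  · obtain ⟨j, -, hj⟩ := Finset.exists_mem_eq_sup _ hp fun j => d * (p.coeff j).natDegree + n * j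
    exact ⟨_, j, hj⟩

theorem exists_eq_C_C_of_poleOrder_eq_zero {d n : ℕ} (hd : d ≠ 0) (hn : n ≠ 0) {p : K[X][X]}
    (hp : poleOrder d n p = 0) : ∃ k : K, p = C (C k) := by
  have weight_eq_zero {j : ℕ} (hj : j ∈ p.support) : (p.coeff j).natDegree = 0 ∧ j = 0 := by
    have := (Finset.le_sup (f := fun j => d * (p.coeff j).natDegree + n * j) hj).trans hp.le
    simpa [hd, hn] using this
  have hpC : p = C (p.coeff 0) := eq_C_of_natDegree_eq_zero <| Nat.eq_zero_of_le_zero <|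
    natDegree_le_iff_coeff_eq_zero.2 fun j hj => by
      by_contra hpj
      exact hj.ne' (weight_eq_zero (mem_support_iff.2 hpj)).2
  have hp0 : (p.coeff 0).natDegree = 0 := by
    by_cases h : p.coeff 0 = 0
    · rw [h, natDegree_zero]
    · exact (weight_eq_zero (mem_support_iff.2 h)).1
  exact ⟨_, hpC.trans (congrArg C (eq_C_of_natDegree_eq_zero hp0))⟩

theorem poleOrder_eq_zero_or_eq_zero_of_add_eq {d n : ℕ} (hd : d ≠ 0) (hn : 2 ≤ n)
    (hnd : n.Coprime d) {p q : K[X][X]} (h : poleOrder d n p + poleOrder d n q = d) :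
    poleOrder d n p = 0 ∨ poleOrder d n q = 0 := by
  obtain ⟨i, j, hp⟩ := exists_poleOrder_eq d n p
  obtain ⟨i', j', hq⟩ := exists_poleOrder_eq d n q
  have hsum : d * (i + i') + n * (j + j') = d := by
    rw [hp, hq] at h
    linarith
  have hii : i + i' ≠ 0 := by
    intro hii
    rw [hii, mul_zero, zero_add] at hsum
    have := Nat.eq_one_of_dvd_coprimes hnd (dvd_refl n) ⟨_, hsum.symm⟩
    lia
  have hjj : n * (j + j') = 0 := by
    have := Nat.le_mul_of_pos_right d (Nat.pos_of_ne_zero hii)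
    lia
  have hjj' : j = 0 ∧ j' = 0 := by simpa [(by lia : n ≠ 0)] using hjj
  rw [hjj, add_zero, mul_eq_left₀ hd] at hsum
  rw [hp, hq, hjj'.1, hjj'.2]
  obtain rfl | rfl : i = 0 ∨ i' = 0 := by lia
  all_goals simp

variable {A Γ : Type*} [CommRing A] [Algebra K A] [LinearOrderedCommGroupWithZero Γ]

theorem valuation_aevalAeval_pow_eq_pow_poleOrder (v : Valuation A Γ) [v.IsTrivialOn K] {x y : A}
    (hx : 1 < v x) {d n : ℕ} (hnd : n.Coprime d) (hy : v y ^ d = v x ^ n) {p : K[X][X]}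
    (hp : p ≠ 0) (hpd : p.natDegree < d) :
    v (aevalAeval x y p) ^ d = v x ^ poleOrder d n p := by
  classical
  let w (j : ℕ) : ℕ := d * (p.coeff j).natDegree + n * j
  have w_injOn : Set.InjOn w p.support := by
    intro i hi j hj hij
    have hmod : n * i ≡ n * j [MOD d] := by
      simpa only [w, Nat.ModEq, Nat.mul_add_mod] using congrArg (· % d) hij
    exact (Nat.ModEq.cancel_left_of_coprime hnd.symm hmod).eq_of_lt_of_lt
      ((le_natDegree_of_mem_supp i hi).trans_lt hpd) ((le_natDegree_of_mem_supp j hj).trans_lt hpd)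
  have valuation_term {j : ℕ} (hj : j ∈ p.support) :
      v (aeval x (p.coeff j) * y ^ j) ^ d = v x ^ w j := by
    rw [map_mul, map_pow, mul_pow, ← pow_mul, mul_comm j d, pow_mul, hy,
      valuation_aeval_eq_valuation_X_pow_natDegree_of_one_lt_valuation_X x hx
        (mem_support_iff.1 hj), ← pow_mul, ← pow_mul, ← pow_add, mul_comm _ d]
  have hsum : aevalAeval x y p = ∑ j ∈ p.support, aeval x (p.coeff j) * y ^ j := by
    conv_lhs => rw [p.as_sum_support_C_mul_X_pow]
    simp
  obtain ⟨j, hj, hjw⟩ := Finset.exists_mem_eq_sup _ (nonempty_support_iff.2 hp) w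
  have hlt : ∀ i ∈ p.support \ {j}, v (aeval x (p.coeff i) * y ^ i) <
      v (aeval x (p.coeff j) * y ^ j) := by
    intro i hi
    obtain ⟨hi, hij⟩ := Finset.mem_sdiff.1 hi
    have hw : w i < w j := lt_of_le_of_ne (hjw ▸ Finset.le_sup hi) fun h =>
      hij (Finset.mem_singleton.2 (w_injOn hi hj h))
    apply lt_of_pow_lt_pow_left₀ d zero_le
    rw [valuation_term hi, valuation_term hj]
    exact pow_lt_pow_right₀ hx hw
  rw [hsum, v.map_sum_eq_of_lt hj hlt, valuation_term hj, ← hjw, poleOrder]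

end Valuation

namespace CurveRing

variable {K : Type*} [Field K] {d : ℕ} {f : K[X]}

theorem root_pow : AdjoinRoot.root ((X : K[X][X]) ^ d - C f) ^ d = AdjoinRoot.of _ f := by
  have := AdjoinRoot.mk_self (f := (X : K[X][X]) ^ d - C f)
  rwa [map_sub, map_pow, AdjoinRoot.mk_X, AdjoinRoot.mk_C, sub_eq_zero] at this

theorem isDomain (hd : d ≠ 0) (hf : Squarefree f) (hf' : ¬ IsUnit f) :
    IsDomain (CurveRing K d f) := by
  obtain ⟨p, hp, hpf⟩ := WfDvdMonoid.exists_irreducible_factor hf' hf.ne_zero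
  have hpf' : ¬ p ^ 2 ∣ f := fun h => hp.not_isUnit (hf p (by rwa [← sq]))
  exact AdjoinRoot.isDomain_of_prime
    (irreducible_X_pow_sub_C_of_prime_dvd hp.prime hpf hpf' hd).prime

theorem of_injective (hd : d ≠ 0) :
    Function.Injective (AdjoinRoot.of ((X : K[X][X]) ^ d - C f)) := by
  apply AdjoinRoot.of.injective_of_degree_ne_zero
  rw [degree_X_pow_sub_C (Nat.pos_of_ne_zero hd)]
  exact_mod_cast hd

theorem transcendental_of_X (hd : d ≠ 0) :
    Transcendental K (AdjoinRoot.of ((X : K[X][X]) ^ d - C f) X) :=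
  (transcendental_algebraMap_iff (of_injective hd)).2 (transcendental_X K)

theorem aevalAeval_eq_mk (p : K[X][X]) :
    aevalAeval (AdjoinRoot.of ((X : K[X][X]) ^ d - C f) X) (AdjoinRoot.root _) p =
      AdjoinRoot.mk _ p := by
  have h : ((aevalAeval (AdjoinRoot.of ((X : K[X][X]) ^ d - C f) X) (AdjoinRoot.root _) :
      K[X][X] →ₐ[K] CurveRing K d f) : K[X][X] →+* CurveRing K d f) = AdjoinRoot.mk _ := by
    ext k
    · simp [AdjoinRoot.algebraMap_eq']
    · simp
    · simp
  exact DFunLike.congr_fun h p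

theorem exists_mk_eq_natDegree_lt (hd : d ≠ 0) (g : CurveRing K d f) :
    ∃ p : K[X][X], AdjoinRoot.mk _ p = g ∧ p.natDegree < d := by
  have hm : ((X : K[X][X]) ^ d - C f).Monic := monic_X_pow_sub_C f hd
  obtain ⟨q, rfl⟩ := AdjoinRoot.mk_surjective g
  refine ⟨_, AdjoinRoot.mk_leftInverse hm (AdjoinRoot.mk _ q), ?_⟩
  rw [AdjoinRoot.modByMonicHom_mk]
  have hne : (X : K[X][X]) ^ d - C f ≠ 1 := fun h => hd <| by
    rw [← natDegree_X_pow_sub_C (n := d) (r := f), h, natDegree_one]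
  simpa only [natDegree_X_pow_sub_C] using natDegree_modByMonic_lt q hm hne

section Valuation

variable {Γ : Type*} [LinearOrderedCommGroupWithZero Γ] (v : Valuation (CurveRing K d f) Γ)
  [v.IsTrivialOn K]

theorem valuation_of (hx : 1 < v (AdjoinRoot.of _ X)) {p : K[X]} (hp : p ≠ 0) :
    v (AdjoinRoot.of _ p) = v (AdjoinRoot.of _ X) ^ p.natDegree := by
  rw [← valuation_aeval_eq_valuation_X_pow_natDegree_of_one_lt_valuation_X _ hx hp,
    ← aevalAeval_C _ (AdjoinRoot.root _), aevalAeval_eq_mk, AdjoinRoot.mk_C]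

theorem exists_mk_eq_valuation_pow_eq_pow_poleOrder (hd : d ≠ 0) (hfd : f.natDegree.Coprime d)
    (hf : f ≠ 0) (hx : 1 < v (AdjoinRoot.of _ X)) {g : CurveRing K d f} (hg : g ≠ 0) :
    ∃ p : K[X][X], AdjoinRoot.mk _ p = g ∧
      v g ^ d = v (AdjoinRoot.of _ X) ^ poleOrder d f.natDegree p := by
  obtain ⟨p, rfl, hpd⟩ := exists_mk_eq_natDegree_lt hd g
  have hp : p ≠ 0 := by
    rintro rfl
    exact hg (map_zero _)
  have hy : v (AdjoinRoot.root _) ^ d = v (AdjoinRoot.of _ X) ^ f.natDegree := by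
    rw [← map_pow, root_pow, valuation_of v hx hf]
  refine ⟨p, rfl, ?_⟩
  rw [← valuation_aevalAeval_pow_eq_pow_poleOrder v hx hfd hy hp hpd, aevalAeval_eq_mk]

theorem exists_mk_eq_poleOrder_add_eq_of_valuation_mul_eq (hd : d ≠ 0)
    (hfd : f.natDegree.Coprime d) (hf : f ≠ 0) (hx : 1 < v (AdjoinRoot.of _ X))
    {g h : CurveRing K d f} {N : ℕ} (hgh : g * h ≠ 0)
    (hN : v (g * h) = v (AdjoinRoot.of _ X) ^ N) :
    ∃ p q : K[X][X], AdjoinRoot.mk _ p = g ∧ AdjoinRoot.mk _ q = h ∧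
      poleOrder d f.natDegree p + poleOrder d f.natDegree q = N * d := by
  obtain ⟨p, hpg, hp⟩ :=
    exists_mk_eq_valuation_pow_eq_pow_poleOrder v hd hfd hf hx (left_ne_zero_of_mul hgh)
  obtain ⟨q, hqh, hq⟩ :=
    exists_mk_eq_valuation_pow_eq_pow_poleOrder v hd hfd hf hx (right_ne_zero_of_mul hgh)
  refine ⟨p, q, hpg, hqh, (pow_right_strictMono₀ hx).injective ?_⟩
  rw [pow_add, ← hp, ← hq, ← mul_pow, ← map_mul, hN, ← pow_mul]

end Valuation

theorem isUnit_mk_of_poleOrder_eq_zero {n : ℕ} (hd : d ≠ 0) (hn : n ≠ 0) {p : K[X][X]}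
    (hp0 : AdjoinRoot.mk ((X : K[X][X]) ^ d - C f) p ≠ 0) (hp : poleOrder d n p = 0) :
    IsUnit (AdjoinRoot.mk ((X : K[X][X]) ^ d - C f) p) := by
  obtain ⟨k, rfl⟩ := exists_eq_C_C_of_poleOrder_eq_zero hd hn hp
  have hk : k ≠ 0 := by
    rintro rfl
    simp at hp0
  exact (((IsUnit.mk0 k hk).map C).map C).map _

theorem irreducible_of_X_sub_C (hd : d ≠ 0) (hn : 2 ≤ f.natDegree) (hfd : f.natDegree.Coprime d)
    (hf : Squarefree f) (a : K) :
    Irreducible (AdjoinRoot.of ((X : K[X][X]) ^ d - C f) (X - C a)) := by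
  have := isDomain hd hf (not_isUnit_of_natDegree_pos f (by lia))
  obtain ⟨V, hVK, hVx⟩ := exists_valuationSubring_one_lt_valuation
    ((transcendental_algebraMap_iff (IsFractionRing.injective (CurveRing K d f)
      (FractionRing (CurveRing K d f)))).2 (transcendental_of_X hd))
  let v : Valuation (CurveRing K d f) _ := V.valuation.comap (algebraMap _ (FractionRing _))
  have hv : v.IsTrivialOn K := ⟨hVK.eq_one⟩
  have hx : 1 < v (AdjoinRoot.of _ X) := hVx
  have hxa : v (AdjoinRoot.of _ (X - C a)) = v (AdjoinRoot.of _ X) ^ 1 := by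
    rw [valuation_of v hx (X_sub_C_ne_zero a), natDegree_X_sub_C]
  have hxa0 : AdjoinRoot.of ((X : K[X][X]) ^ d - C f) (X - C a) ≠ 0 :=
    (map_ne_zero_iff _ (of_injective hd)).2 (X_sub_C_ne_zero a)
  refine ⟨?_, fun g h hgh => ?_⟩
  · have : Module.Finite K[X] (CurveRing K d f) := (monic_X_pow_sub_C f hd).finite_adjoinRoot
    have : IsLocalHom (AdjoinRoot.of ((X : K[X][X]) ^ d - C f)) :=
      (algebraMap_isIntegral_iff.2 inferInstance).isLocalHom (of_injective hd)
    exact (isUnit_map_iff _ _).not.2 (not_isUnit_X_sub_C a)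
  · rw [hgh] at hxa hxa0
    obtain ⟨p, q, rfl, rfl, hpq⟩ :=
      exists_mk_eq_poleOrder_add_eq_of_valuation_mul_eq v hd hfd hf.ne_zero hx hxa0 hxa
    rw [one_mul] at hpq
    exact (poleOrder_eq_zero_or_eq_zero_of_add_eq hd hn hfd hpq).imp
      (isUnit_mk_of_poleOrder_eq_zero hd (by lia) (left_ne_zero_of_mul hxa0))
      (isUnit_mk_of_poleOrder_eq_zero hd (by lia) (right_ne_zero_of_mul hxa0))

end CurveRing

section Torsion

variable {K : Type*} [Field K] {d : ℕ} {f : K[X]} {a c : K} {m : ℕ}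

theorem eq_of_ptIdeal_eq {c' : K} (hc' : c' ^ d = f.eval a)
    (h : ptIdeal d f a c = ptIdeal d f a c') : c = c' := by
  let evalAtPoint : CurveRing K d f →+* K := AdjoinRoot.lift (evalRingHom a) c' (by simp [hc'])
  have hker : ptIdeal d f a c' ≤ RingHom.ker evalAtPoint := by
    simp [ptIdeal, Ideal.span_le, Set.pair_subset_iff, evalAtPoint]
  have hmem : AdjoinRoot.root _ - AdjoinRoot.of _ (C c) ∈ ptIdeal d f a c :=
    Ideal.subset_span (Set.mem_insert_of_mem _ (Set.mem_singleton _))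
  have hzero : evalAtPoint (AdjoinRoot.root _ - AdjoinRoot.of _ (C c)) = 0 := hker (h ▸ hmem)
  simpa [evalAtPoint, sub_eq_zero, eq_comm] using hzero

theorem ptIdeal_zero_pow (hd : d ≠ 0) (hf : Squarefree f) (ha : f.IsRoot a) :
    ptIdeal d f a 0 ^ d = Ideal.span {AdjoinRoot.of _ (X - C a)} := by
  obtain ⟨q, rfl⟩ := dvd_iff_isRoot.2 ha
  have hcoprime : IsCoprime (X - C a) q := (squarefree_mul_iff.1 hf).1.isCoprime
  rw [ptIdeal, C_0, map_zero, sub_zero]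
  exact span_pair_pow_eq_span_singleton hd (by rw [CurveRing.root_pow, map_mul])
    (hcoprime.map (AdjoinRoot.of _))

theorem ne_zero_of_isTorsionOfOrder (hd : d ≠ 0) (hn : 2 ≤ f.natDegree)
    (hfd : f.natDegree.Coprime d) (hf : Squarefree f) (hP : c ^ d = f.eval a) (hmd : m ≠ d)
    (h : IsTorsionOfOrder d f a c m) : c ≠ 0 := by
  rintro rfl
  have := CurveRing.isDomain hd hf (not_isUnit_of_natDegree_pos f (by lia))
  have hpow : ptIdeal d f a 0 ^ d = Ideal.span {AdjoinRoot.of _ (X - C a)} :=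
    ptIdeal_zero_pow hd hf (by rw [IsRoot, ← hP, zero_pow hd])
  have hle : m ≤ d := h.2 ⟨Nat.pos_of_ne_zero hd, _, hpow⟩
  exact hmd (eq_of_isPrincipal_pow_of_pow_eq_span_irreducible
    (CurveRing.irreducible_of_X_sub_C hd hn hfd hf a) hpow h.1.1.ne' hle h.1.2)

/-- The endomorphism `y ↦ ζ y` of the coordinate ring, for a `d`-th root of unity `ζ`. -/
noncomputable def CurveRing.twist (ζ : rootsOfUnity d K) : CurveRing K d f →+* CurveRing K d f :=
  AdjoinRoot.lift (AdjoinRoot.of _) (AdjoinRoot.of _ (C (ζ.1 : K)) * AdjoinRoot.root _) <| by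
    have hζ : (ζ.1 : K) ^ d = 1 := (mem_rootsOfUnity' d _).1 ζ.2
    simp [mul_pow, ← map_pow, hζ, CurveRing.root_pow]

theorem map_twist_ptIdeal (ζ : rootsOfUnity d K) (a c : K) :
    (ptIdeal d f a (ζ.1 * c)).map (CurveRing.twist ζ) = ptIdeal d f a c := by
  have hy : CurveRing.twist (f := f) ζ (AdjoinRoot.root _ - AdjoinRoot.of _ (C (ζ.1 * c))) =
      AdjoinRoot.of _ (C (ζ.1 : K)) * (AdjoinRoot.root _ - AdjoinRoot.of _ (C c)) := by
    simp [CurveRing.twist, mul_sub]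
  have hζ : IsUnit (AdjoinRoot.of ((X : K[X][X]) ^ d - C f) (C (ζ.1 : K))) :=
    (ζ.1.isUnit.map C).map _
  rw [ptIdeal, ptIdeal, Ideal.map_span, Set.image_pair, hy, Ideal.span_insert, Ideal.span_insert,
    Ideal.span_singleton_mul_left_unit hζ, CurveRing.twist, AdjoinRoot.lift_of]

theorem isPrincipal_ptIdeal_pow_of_mul {ζ : rootsOfUnity d K} {k : ℕ}
    (h : (ptIdeal d f a (ζ.1 * c) ^ k).IsPrincipal) : (ptIdeal d f a c ^ k).IsPrincipal := by
  rw [← map_twist_ptIdeal ζ, ← Ideal.map_pow]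
  exact h.map_ringHom _

theorem isTorsionOfOrder_mul_iff (ζ : rootsOfUnity d K) :
    IsTorsionOfOrder d f a (ζ.1 * c) m ↔ IsTorsionOfOrder d f a c m := by
  have hprincipal (k : ℕ) :
      (ptIdeal d f a (ζ.1 * c) ^ k).IsPrincipal ↔ (ptIdeal d f a c ^ k).IsPrincipal :=
    ⟨isPrincipal_ptIdeal_pow_of_mul, fun h =>
      isPrincipal_ptIdeal_pow_of_mul (ζ := ζ⁻¹) (by simpa using h)⟩
  simp only [IsTorsionOfOrder, hprincipal]

variable (d f m) in
/-- The `K`-points of the curve `y ^ d = f(x)` that are torsion points of order `m` on its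
Jacobian. -/
def torsionPoints : Set (K × K) :=
  {P | P.2 ^ d = f.eval P.1 ∧ IsTorsionOfOrder d f P.1 P.2 m}

/-- The action `ζ • (a, c) = (a, ζ c)` of the `d`-th roots of unity. -/
instance : MulAction (rootsOfUnity d K) (torsionPoints d f m) where
  smul ζ P := ⟨(P.1.1, ζ.1 * P.1.2), by
    have hζ : (ζ.1 : K) ^ d = 1 := (mem_rootsOfUnity' d _).1 ζ.2
    rw [mul_pow, hζ, one_mul, P.2.1], (isTorsionOfOrder_mul_iff ζ).2 P.2.2⟩
  one_smul P := Subtype.ext (Prod.ext rfl (one_mul P.1.2))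
  mul_smul ζ ζ' P := Subtype.ext (Prod.ext rfl (mul_assoc (ζ.1 : K) ζ'.1 P.1.2))

theorem natCard_rootsOfUnity_dvd_ncard_torsionPoints
    (h : ∀ P ∈ torsionPoints d f m, P.2 ≠ 0) :
    Nat.card (rootsOfUnity d K) ∣ (torsionPoints d f m).ncard := by
  rw [← Nat.card_coe_set_eq]
  refine natCard_dvd_natCard_of_stabilizer_eq_bot fun P => (Subgroup.eq_bot_iff_forall _).2 ?_
  intro ζ hζ
  have hfix : ζ.1 * P.1.2 = P.1.2 := congrArg (fun Q => Q.1.2) (MulAction.mem_stabilizer_iff.1 hζ)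
  exact Subtype.ext (Units.ext ((mul_eq_right₀ (h P P.2)).1 hfix))

end Torsion

theorem stmt_3_general {K : Type*} [Field K] (d : ℕ) (f : K[X])
    (hn : 2 ≤ f.natDegree) (hfd : f.natDegree.Coprime d) (hsqf : Squarefree f)
    (a c : K) (hP : c ^ d = f.eval a) (m : ℕ) (hmd : m ≠ d)
    (horder : IsTorsionOfOrder d f a c m) :
    c ≠ 0 ∧
    (∀ ζ ζ' : K, ζ ^ d = 1 → ζ' ^ d = 1 →
      ptIdeal d f a (ζ * c) = ptIdeal d f a (ζ' * c) → ζ = ζ') ∧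
    (∀ ζ : K, ζ ^ d = 1 → IsTorsionOfOrder d f a (ζ * c) m) ∧
    Nat.card (rootsOfUnity d K) ∣
      {P : K × K | P.2 ^ d = f.eval P.1 ∧ IsTorsionOfOrder d f P.1 P.2 m}.ncard := by
  have hd : d ≠ 0 := by
    rintro rfl
    rw [Nat.coprime_zero_right] at hfd
    lia
  have : NeZero d := ⟨hd⟩
  have ne_zero {a c : K} (hP : c ^ d = f.eval a) (h : IsTorsionOfOrder d f a c m) : c ≠ 0 :=
    ne_zero_of_isTorsionOfOrder hd hn hfd hsqf hP hmd h
  refine ⟨ne_zero hP horder, fun ζ ζ' _ hζ' h => ?_, fun ζ hζ => ?_,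
    natCard_rootsOfUnity_dvd_ncard_torsionPoints fun P hP => ne_zero hP.1 hP.2⟩
  · exact mul_right_cancel₀ (ne_zero hP horder)
      (eq_of_ptIdeal_eq (by rw [mul_pow, hζ', one_mul, hP]) h)
  · exact (isTorsionOfOrder_mul_iff (rootsOfUnity.mkOfPowEq ζ hζ)).2 horder

theorem stmt_3 {K : Type*} [Field K] [IsAlgClosed K] (d n : ℕ)
    (hd : 2 ≤ d) (hdn : d < n) (hgcd : Nat.gcd n d = 1)
    (hchar : ¬ (ringChar K ∣ d))
    (f : K[X]) (hmonic : f.Monic) (hdeg : f.natDegree = n) (hsqf : Squarefree f)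
    (hDed : IsDedekindDomain (CurveRing K d f))
    (a c : K) (hP : c ^ d = f.eval a)
    (m : ℕ) (hm : 1 < m) (hmd : m ≠ d)
    (horder : IsTorsionOfOrder d f a c m) :
    c ≠ 0 ∧
    (∀ ζ ζ' : K, ζ ^ d = 1 → ζ' ^ d = 1 →
      ptIdeal d f a (ζ * c) = ptIdeal d f a (ζ' * c) → ζ = ζ') ∧
    (∀ ζ : K, ζ ^ d = 1 → IsTorsionOfOrder d f a (ζ * c) m) ∧
    d ∣ {P : K × K | P.2 ^ d = f.eval P.1 ∧ IsTorsionOfOrder d f P.1 P.2 m}.ncard := by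
  have : NeZero d := ⟨by lia⟩
  have : NeZero (d : K) := ⟨fun h => hchar ((ringChar.spec K d).1 h)⟩
  simpa only [HasEnoughRootsOfUnity.natCard_rootsOfUnity] using
    stmt_3_general d f (by lia) (hdeg ▸ hgcd) hsqf a c hP m hmd horder
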